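/- Let X be a separable Banach space, Y a Banach space, G ⊂ X open, and f : G → Y a Borel measurable mapping whose restriction to every line meeting G is continuous. Then the set of all points x ∈ G at which f is Gâteaux differentiable but not Lipschitz at x is σ-directionally porous. -/

import Mathlib

open Filter Metric Set Topology MeasureTheory

section CommonDefs
variable {X Y : Type*}

/-- `f` is (pointwise) Lipschitz at `x`:
`limsup_{y→x} ‖f y - f x‖/‖y - x‖ < ∞`. -/
def LipschitzAtPt [NormedAddCommGroup X] [NormedAddCommGroup Y]
    (f : X → Y) (x : X) : Prop :=
  ∃ K > (0:ℝ), ∃ δ > (0:ℝ), ∀ y ∈ ball x δ, ‖f y - f x‖ ≤ K * ‖y - x‖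

/-- The (two-sided) Hadamard directional derivative of `f` at `x` in direction `v` is `y`:
`(f (x + t z) - f x)/t → y` as `z → v`, `t → 0`, `t ≠ 0`. -/
def HadamardDerivAt [NormedAddCommGroup X] [NormedSpace ℝ X]
    [NormedAddCommGroup Y] [NormedSpace ℝ Y]
    (f : X → Y) (x v : X) (y : Y) : Prop :=
  Tendsto (fun p : ℝ × X => p.1⁻¹ • (f (x + p.1 • p.2) - f x))
    ((𝓝[≠] (0:ℝ)) ×ˢ 𝓝 v) (𝓝 y)

/-- The one-sided Hadamard directional derivative of `f` at `x` in direction `v` is `y`: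
`(f (x + t z) - f x)/t → y` as `z → v`, `t → 0+`. -/
def HadamardPlusDerivAt [NormedAddCommGroup X] [NormedSpace ℝ X]
    [NormedAddCommGroup Y] [NormedSpace ℝ Y]
    (f : X → Y) (x v : X) (y : Y) : Prop :=
  Tendsto (fun p : ℝ × X => p.1⁻¹ • (f (x + p.1 • p.2) - f x))
    ((𝓝[>] (0:ℝ)) ×ˢ 𝓝 v) (𝓝 y)

/-- `f` is Gâteaux differentiable at `x` with derivative the continuous linear map `L`. -/
def GateauxDiffAt [NormedAddCommGroup X] [NormedSpace ℝ X]
    [NormedAddCommGroup Y] [NormedSpace ℝ Y]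
    (f : X → Y) (x : X) (L : X →L[ℝ] Y) : Prop :=
  ∀ v : X, Tendsto (fun t : ℝ => t⁻¹ • (f (x + t • v) - f x)) (𝓝[≠] (0:ℝ)) (𝓝 (L v))

/-- `f` is Hadamard differentiable at `x` with derivative the continuous linear map `L`. -/
def HadamardDiffAt [NormedAddCommGroup X] [NormedSpace ℝ X]
    [NormedAddCommGroup Y] [NormedSpace ℝ Y]
    (f : X → Y) (x : X) (L : X →L[ℝ] Y) : Prop :=
  ∀ v : X, HadamardDerivAt f x v (L v)

/-- `A` is directionally porous at `x`. -/
def DirPorousAt [NormedAddCommGroup X] [NormedSpace ℝ X] (A : Set X) (x : X) : Prop :=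
  ∃ v : X, v ≠ 0 ∧ ∃ p > (0:ℝ), ∃ t : ℕ → ℝ, (∀ n, 0 < t n) ∧
    Tendsto t atTop (𝓝 (0:ℝ)) ∧ ∀ n, ball (x + t n • v) (p * t n) ∩ A = ∅

/-- `A` is a countable union of directionally porous sets. -/
def SigmaDirPorous [NormedAddCommGroup X] [NormedSpace ℝ X] (A : Set X) : Prop :=
  ∃ S : ℕ → Set X, A = ⋃ n, S n ∧ ∀ n, ∀ x ∈ S n, DirPorousAt (S n) x

/-- `A` is porous at `x`. -/
def PorousAt [NormedAddCommGroup X] (A : Set X) (x : X) : Prop :=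
  ∃ p > (0:ℝ), ∃ y : ℕ → X, (∀ n, y n ≠ x) ∧ Tendsto y atTop (𝓝 x) ∧
    ∀ n, ball (y n) (p * ‖y n - x‖) ∩ A = ∅

/-- `A` is a countable union of porous sets. -/
def SigmaPorous [NormedAddCommGroup X] (A : Set X) : Prop :=
  ∃ S : ℕ → Set X, A = ⋃ n, S n ∧ ∀ n, ∀ x ∈ S n, PorousAt (S n) x

end CommonDefs

/-!
If `f` has bounded difference quotients at `x` in every direction, the Baire category theorem gives
a ball `ball d r` of directions, residually many of which satisfy `‖f (x + t v) - f x‖ ≤ K t` for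
`0 < t < δ`, with `K` and `δ` common to all of them; continuity along lines extends this to the
whole ball. Countably many parameters `K`, `δ`, `d`, `r` suffice. Fix them and let `S` be the set of
points with this property. If `S` met all small balls `ball (x - s d) (r s / 2)`, at points `z_s`
say, then for `s = 2 ‖y - x‖ / r` both `x` and `y` would lie in `z_s + s • ball d r`, hence
`‖f y - f x‖ ≤ 2 K s = (4 K / r) ‖y - x‖`, and `f` would be Lipschitz at `x`. So `S` is porous in
the direction `-d` at each of its points where `f` is not Lipschitz.
-/

open Asymptotics

section DirPorous

variable {X : Type*} [NormedAddCommGroup X] [NormedSpace ℝ X] {A B : Set X} {x : X}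

lemma DirPorousAt.mono (hB : DirPorousAt B x) (hAB : A ⊆ B) : DirPorousAt A x := by
  obtain ⟨v, hv, p, hp, t, ht_pos, ht_lim, ht_empty⟩ := hB
  exact ⟨v, hv, p, hp, t, ht_pos, ht_lim, fun n =>
    subset_empty_iff.1 ((inter_subset_inter_right _ hAB).trans (ht_empty n).subset)⟩

lemma dirPorousAt_of_frequently {v : X} (hv : v ≠ 0) {p : ℝ} (hp : 0 < p)
    (h : ∃ᶠ s : ℝ in 𝓝[>] 0, ball (x + s • v) (p * s) ∩ A = ∅) : DirPorousAt A x := by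
  obtain ⟨t, ht_lim, ht⟩ := exists_seq_forall_of_frequently (h.and_eventually self_mem_nhdsWithin)
  exact ⟨v, hv, p, hp, t, fun n => (ht n).2, ht_lim.mono_right nhdsWithin_le_nhds,
    fun n => (ht n).1⟩

lemma sigmaDirPorous_of_subset_iUnion {ι : Type*} [Countable ι] {S : ι → Set X}
    (hA : A ⊆ ⋃ i, S i) (hS : ∀ i, ∀ x ∈ A ∩ S i, DirPorousAt (S i) x) : SigmaDirPorous A := by
  have := Encodable.ofCountable ι
  refine ⟨fun n => ⋃ i ∈ Encodable.decode₂ ι n, A ∩ S i, ?_, fun n => ?_⟩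
  · rw [Encodable.iUnion_decode₂, ← inter_iUnion, inter_eq_left.2 hA]
  · refine Encodable.iUnion_decode₂_cases (C := fun T => ∀ x ∈ T, DirPorousAt T x)
      (fun x hx => hx.elim) fun i x hx => ?_
    exact (hS i x hx).mono inter_subset_right

lemma SigmaDirPorous.mono (hB : SigmaDirPorous B) (hAB : A ⊆ B) : SigmaDirPorous A := by
  obtain ⟨S, rfl, hS⟩ := hB
  exact sigmaDirPorous_of_subset_iUnion hAB fun n x hx => hS n x hx.2

end DirPorous

section Baire

variable {X : Type*} [TopologicalSpace X]

lemma exists_isOpen_of_baireMeasurableSet_of_not_isMeagre {s : Set X}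
    (hs : BaireMeasurableSet s) (hs' : ¬ IsMeagre s) :
    ∃ U, IsOpen U ∧ U.Nonempty ∧ ∀ᵇ v, v ∈ U → v ∈ s := by
  obtain ⟨U, hU, hsU⟩ := hs.residualEq_isOpen
  rw [eventuallyEq_set] at hsU
  refine ⟨U, hU, nonempty_iff_ne_empty.2 ?_, hsU.mono fun v hv => hv.2⟩
  rintro rfl
  exact hs' (hsU.mono fun v hv => hv.1)

lemma exists_isOpen_of_iUnion_baireMeasurableSet [BaireSpace X] [Nonempty X] {ι : Type*}
    [Countable ι] {s : ι → Set X} (hs : ∀ i, BaireMeasurableSet (s i))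
    (h_univ : ⋃ i, s i = univ) :
    ∃ i U, IsOpen U ∧ U.Nonempty ∧ ∀ᵇ v, v ∈ U → v ∈ s i := by
  obtain ⟨i, hi⟩ : ∃ i, ¬ IsMeagre (s i) := by
    by_contra! h_meagre
    exact not_isMeagre_of_isOpen isOpen_univ univ_nonempty (h_univ ▸ isMeagre_iUnion h_meagre)
  exact ⟨i, exists_isOpen_of_baireMeasurableSet_of_not_isMeagre (hs i) hi⟩

lemma exists_forall_add_smul_mem_of_mem_residual {𝕜 : Type*} [DivisionRing 𝕜]
    [AddCommGroup X] [ContinuousAdd X] [Module 𝕜 X] [ContinuousConstSMul 𝕜 X] [BaireSpace X]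
    {R : Set X} (hR : R ∈ residual X) (v : X) {ι : Type*} [Countable ι] {t : ι → 𝕜}
    (ht : ∀ i, t i ≠ 0) : ∃ u, ∀ i, v + t i • u ∈ R := by
  have h_preimage (i : ι) : (fun u => v + t i • u) ⁻¹' R ∈ residual X :=
    let e : X ≃ₜ X := (Homeomorph.smulOfNeZero (t i) (ht i)).trans (Homeomorph.addLeft v)
    tendsto_residual_of_isOpenMap e.continuous e.isOpenMap hR
  obtain ⟨u, hu⟩ := (dense_of_mem_residual (countable_iInter_mem.2 h_preimage)).nonempty
  exact ⟨u, mem_iInter.1 hu⟩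

end Baire

section AlongLines

variable {X Z : Type*} [AddCommGroup X] [Module ℝ X] [TopologicalSpace Z]

/-- Radial continuity: the restriction of `f` to each line through `a` is continuous at `a`. Unlike
continuity on lines meeting an open set, this is a condition at the single point `a`. -/
def ContinuousAlongLinesAt (f : X → Z) (a : X) : Prop :=
  ∀ v : X, ContinuousAt (fun t : ℝ => f (a + t • v)) 0

variable {f : X → Z} {x v : X} {t : ℝ}

lemma ContinuousAlongLinesAt.continuousAt_line (hf : ContinuousAlongLinesAt f (x + t • v)) :
    ContinuousAt (fun s : ℝ => f (x + s • v)) t := by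
  have h_shift : ContinuousAt (fun s : ℝ => s - t) t := by fun_prop
  have := ContinuousAt.comp_of_eq (hf v) h_shift (sub_self t)
  refine this.congr (Eventually.of_forall fun s => ?_)
  simp only [Function.comp_apply, add_assoc, ← add_smul, add_sub_cancel]

lemma ContinuousAlongLinesAt.comp_add_smul (hf : ContinuousAlongLinesAt f (x + t • v)) :
    ContinuousAlongLinesAt (fun w => f (x + t • w)) v := by
  intro u
  simpa only [smul_add, smul_comm t, add_assoc] using hf (t • u)

lemma ContinuousAlongLinesAt.mem_of_eventually_residual [TopologicalSpace X] [ContinuousAdd X]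
    [ContinuousSMul ℝ X] [BaireSpace X] (hf : ContinuousAlongLinesAt f v) {C : Set Z}
    (hC : IsClosed C) {U : Set X} (hU : U ∈ 𝓝 v) (h : ∀ᵇ w, w ∈ U → f w ∈ C) : f v ∈ C := by
  let τ : ℕ → ℝ := fun j => 1 / ((j : ℝ) + 1)
  have hτ : Tendsto τ atTop (𝓝 0) := tendsto_one_div_add_atTop_nhds_zero_nat
  obtain ⟨u, hu⟩ := exists_forall_add_smul_mem_of_mem_residual h v (t := τ)
    fun j => Nat.one_div_pos_of_nat.ne'
  have h_line : Tendsto (fun j => v + τ j • u) atTop (𝓝 v) := by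
    simpa only [zero_smul, add_zero] using tendsto_const_nhds.add (hτ.smul_const u)
  have h_lim : Tendsto (fun j => f (v + τ j • u)) atTop (𝓝 (f v)) := by
    simpa only [ContinuousAt, zero_smul, add_zero, Function.comp_def] using (hf u).tendsto.comp hτ
  exact hC.mem_of_tendsto h_lim ((h_line.eventually hU).mono fun j hj => hu j hj)

lemma continuousAlongLinesAt_of_continuousOn [TopologicalSpace X] [ContinuousAdd X]
    [ContinuousSMul ℝ X] {G : Set X} (hG : IsOpen G)
    (hf : ∀ a v : X, v ≠ 0 → ContinuousOn (fun t : ℝ => f (a + t • v)) {t : ℝ | a + t • v ∈ G})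
    (hx : x ∈ G) : ContinuousAlongLinesAt f x := by
  intro v
  obtain rfl | hv := eq_or_ne v 0
  · simpa only [smul_zero] using continuousAt_const
  · have h_open : IsOpen {t : ℝ | x + t • v ∈ G} := hG.preimage (by fun_prop)
    exact (hf x v hv).continuousAt (h_open.mem_nhds (by simpa using hx))

end AlongLines

section Lipschitz

variable {X Y : Type*} [NormedAddCommGroup X] [NormedAddCommGroup Y] {f : X → Y} {x : X}

lemma lipschitzAtPt_of_eventually_nhdsNE {K : ℝ}
    (h : ∀ᶠ y in 𝓝[≠] x, ‖f y - f x‖ ≤ K * ‖y - x‖) : LipschitzAtPt f x := by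
  obtain ⟨δ, hδ, h_ball⟩ := Metric.eventually_nhds_iff_ball.1 (eventually_nhdsWithin_iff.1 h)
  refine ⟨max K 1, by positivity, δ, hδ, fun y hy => ?_⟩
  obtain rfl | hyx := eq_or_ne y x
  · simp
  · exact (h_ball y hy hyx).trans (by gcongr; exact le_max_left K 1)

variable [NormedSpace ℝ X]

lemma GateauxDiffAt.isBigO [NormedSpace ℝ Y] {L : X →L[ℝ] Y} (hf : GateauxDiffAt f x L) (v : X) :
    (fun t : ℝ => f (x + t • v) - f x) =O[𝓝[>] 0] fun t => t := by
  have h_deriv : HasDerivAt (fun t : ℝ => f (x + t • v)) (L v) 0 :=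
    hasLineDerivAt_iff_tendsto_slope_zero.2 (hf v)
  simpa only [zero_smul, add_zero, sub_zero] using
    h_deriv.hasFDerivAt.isBigO_sub.mono nhdsWithin_le_nhds

/-- The directions `v` in which `f` is Lipschitz at `x` with constant `K` up to the scale `δ`,
as far as the ray from `x` stays in the domain `G`. -/
def lipschitzDirections (G : Set X) (f : X → Y) (K δ : ℝ) (x : X) : Set X :=
  {v | ∀ t ∈ Ioo 0 δ, x + t • v ∈ G → ‖f (x + t • v) - f x‖ ≤ K * t}

variable {G : Set X} {K δ : ℝ}

lemma mem_lipschitzDirections_iff_rat (hG : IsOpen G) (hf : ∀ a ∈ G, ContinuousAlongLinesAt f a)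
    {v : X} : v ∈ lipschitzDirections G f K δ x ↔
      ∀ q : ℚ, (q : ℝ) ∈ Ioo 0 δ → x + (q : ℝ) • v ∈ G →
        ‖f (x + (q : ℝ) • v) - f x‖ ≤ K * q := by
  refine ⟨fun hv q => hv q, fun hv t ht htG => ?_⟩
  by_contra! h_lt
  have h_scale : ∀ᶠ s in 𝓝 t, s ∈ Ioo 0 δ := isOpen_Ioo.mem_nhds ht
  have h_dom : ∀ᶠ s : ℝ in 𝓝 t, x + s • v ∈ G :=
    (hG.preimage (by fun_prop : Continuous fun s : ℝ => x + s • v)).mem_nhds htG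
  have h_bound : ∀ᶠ s : ℝ in 𝓝 t, K * s < ‖f (x + s • v) - f x‖ :=
    (continuousAt_const.mul continuousAt_id).eventually_lt
      ((hf _ htG).continuousAt_line.sub_const (f x)).norm h_lt
  obtain ⟨-, ⟨q, rfl⟩, hq, hqG, hq_lt⟩ :=
    Rat.denseRange_cast.inter_nhds_nonempty (h_scale.and (h_dom.and h_bound))
  exact (hv q hq hqG).not_gt hq_lt

lemma baireMeasurableSet_lipschitzDirections (hG : IsOpen G)
    (hf : ∀ a ∈ G, ContinuousAlongLinesAt f a)
    (hf_baire : ∀ C, IsClosed C → BaireMeasurableSet (G ∩ f ⁻¹' C)) :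
    BaireMeasurableSet (lipschitzDirections G f K δ x) := by
  have h_iInter : lipschitzDirections G f K δ x = ⋂ (q : ℚ) (_ : (q : ℝ) ∈ Ioo 0 δ),
      (fun v => x + (q : ℝ) • v) ⁻¹' (Gᶜ ∪ G ∩ f ⁻¹' closedBall (f x) (K * q)) := by
    ext v
    simp only [mem_lipschitzDirections_iff_rat hG hf, mem_iInter, mem_preimage, mem_union,
      mem_compl_iff, mem_inter_iff, mem_closedBall, dist_eq_norm, ← imp_iff_not_or, imp_and,
      imp_self, true_and]
  rw [h_iInter]
  refine .iInter fun q => .iInter fun hq => ?_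
  let e : X ≃ₜ X := (Homeomorph.smulOfNeZero (q : ℝ) hq.1.ne').trans (Homeomorph.addLeft x)
  exact (hG.baireMeasurableSet.compl.union (hf_baire _ isClosed_closedBall)).preimage
    e.continuous e.isOpenMap

lemma iUnion_lipschitzDirections_eq_univ
    (hf : ∀ v, (fun t : ℝ => f (x + t • v) - f x) =O[𝓝[>] 0] fun t => t) :
    ⋃ n : ℕ, lipschitzDirections G f n (1 / (n + 1)) x = univ := by
  refine eq_univ_of_forall fun v => mem_iUnion.2 ?_
  obtain ⟨c, hc⟩ := (hf v).bound
  obtain ⟨ε, hε : 0 < ε, h_bound⟩ := mem_nhdsGT_iff_exists_Ioo_subset.1 hc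
  obtain ⟨n, hnc, hnε⟩ := ((eventually_ge_atTop ⌈c⌉₊).and
    (tendsto_one_div_add_atTop_nhds_zero_nat.eventually_lt_const hε)).exists
  refine ⟨n, fun t ht _ => (h_bound ⟨ht.1, ht.2.trans hnε⟩).trans ?_⟩
  rw [Real.norm_of_nonneg ht.1.le]
  exact mul_le_mul_of_nonneg_right (Nat.ceil_le.1 hnc) ht.1.le

lemma subset_lipschitzDirections_of_eventually_residual [BaireSpace X] (hG : IsOpen G)
    (hf : ∀ a ∈ G, ContinuousAlongLinesAt f a) {U : Set X} (hU : IsOpen U)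
    (h : ∀ᵇ v, v ∈ U → v ∈ lipschitzDirections G f K δ x) :
    U ⊆ lipschitzDirections G f K δ x := by
  intro v hv t ht htG
  have h_nhds : U ∩ (fun w => x + t • w) ⁻¹' G ∈ 𝓝 v :=
    (hU.inter (hG.preimage (by fun_prop))).mem_nhds ⟨hv, htG⟩
  rw [← mem_closedBall_iff_norm]
  exact (hf _ htG).comp_add_smul.mem_of_eventually_residual isClosed_closedBall h_nhds
    (h.mono fun w hw hwU => mem_closedBall_iff_norm.2 (hw hwU.1 t ht hwU.2))

/-- The points of `G` at which `f` is Lipschitz, with constant `K` up to the scale `δ`, in every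
direction of the ball `ball d r`. For countably many values of the parameters these sets exhaust
the exceptional set. -/
def lipschitzConeSet (G : Set X) (f : X → Y) (K δ : ℝ) (d : X) (r : ℝ) : Set X :=
  {x ∈ G | ball d r ⊆ lipschitzDirections G f K δ x}

lemma exists_mem_lipschitzConeSet [BaireSpace X] (hG : IsOpen G)
    (hf : ∀ a ∈ G, ContinuousAlongLinesAt f a)
    (hf_baire : ∀ C, IsClosed C → BaireMeasurableSet (G ∩ f ⁻¹' C)) (hx : x ∈ G)
    (hfx : ∀ v, (fun t : ℝ => f (x + t • v) - f x) =O[𝓝[>] 0] fun t => t)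
    {ι : Type*} {d : ι → X} (hd : DenseRange d) :
    ∃ (n m : ℕ) (i : ι), x ∈ lipschitzConeSet G f n (1 / (n + 1)) (d i) (1 / (m + 1)) := by
  obtain ⟨n, U, hU, hU_ne, h_res⟩ := exists_isOpen_of_iUnion_baireMeasurableSet
    (fun n : ℕ => baireMeasurableSet_lipschitzDirections hG hf hf_baire (δ := 1 / (n + 1)))
    (iUnion_lipschitzDirections_eq_univ hfx)
  obtain ⟨i, hi⟩ := hd.exists_mem_open hU hU_ne
  obtain ⟨ε, hε, h_ball⟩ := Metric.isOpen_iff.1 hU _ hi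
  obtain ⟨m, hm⟩ := exists_nat_one_div_lt hε
  exact ⟨n, m, i, hx, (ball_subset_ball hm.le).trans <|
    h_ball.trans (subset_lipschitzDirections_of_eventually_residual hG hf hU h_res)⟩

variable {d : X} {r : ℝ}

lemma norm_sub_le_of_mem_lipschitzConeSet {z w : X} (hz : z ∈ lipschitzConeSet G f K δ d r)
    (hw : w ∈ G) {s : ℝ} (hs : s ∈ Ioo 0 δ) (hwz : ‖w - (z + s • d)‖ < r * s) :
    ‖f w - f z‖ ≤ K * s := by
  have hw_eq : z + s • s⁻¹ • (w - z) = w := by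
    rw [smul_inv_smul₀ hs.1.ne', add_sub_cancel]
  have h_dir : s⁻¹ • (w - z) ∈ ball d r := by
    have h_scaled : s⁻¹ • (w - z) - d = s⁻¹ • (w - (z + s • d)) := by
      rw [← sub_sub, smul_sub s⁻¹ (w - z), inv_smul_smul₀ hs.1.ne']
    rwa [mem_ball_iff_norm, h_scaled, norm_smul, norm_inv, Real.norm_of_nonneg hs.1.le,
      inv_mul_lt_iff₀ hs.1, mul_comm s]
  simpa only [hw_eq] using hz.2 h_dir s hs (by rwa [hw_eq])

lemma lipschitzAtPt_of_eventually_inter_lipschitzConeSet (hG : IsOpen G) (hx : x ∈ G) (hδ : 0 < δ)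
    (hr : 0 < r) (h : ∀ᶠ s : ℝ in 𝓝[>] 0,
      (ball (x + s • -d) (r / 2 * s) ∩ lipschitzConeSet G f K δ d r).Nonempty) :
    LipschitzAtPt f x := by
  let s : X → ℝ := fun y => 2 / r * ‖y - x‖
  have hs : Tendsto s (𝓝[≠] x) (𝓝[>] 0) := by
    refine tendsto_nhdsWithin_iff.2 ⟨?_, ?_⟩
    · have : Continuous s := by fun_prop
      simpa [s] using (this.tendsto x).mono_left nhdsWithin_le_nhds
    · filter_upwards [self_mem_nhdsWithin] with y hy
      exact mul_pos (by positivity) (norm_sub_pos_iff.2 hy)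
  refine lipschitzAtPt_of_eventually_nhdsNE (K := 4 * K / r) ?_
  filter_upwards [hs.eventually h, hs.eventually (Ioo_mem_nhdsGT hδ),
    nhdsWithin_le_nhds (hG.mem_nhds hx)] with y ⟨z, hz_ball, hz⟩ hsy hyG
  have h_half : r / 2 * s y = ‖y - x‖ := by simp only [s]; field_simp
  have h_near (w : X) (hw : ‖w - x‖ ≤ ‖y - x‖) : ‖w - (z + s y • d)‖ < r * s y := by
    rw [mem_ball_iff_norm', smul_neg, h_half] at hz_ball
    calc ‖w - (z + s y • d)‖ = ‖(w - x) + (x + -(s y • d) - z)‖ := by congr 1; abel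
      _ ≤ ‖w - x‖ + ‖x + -(s y • d) - z‖ := norm_add_le _ _
      _ < r * s y := by linarith
  have hy_z := norm_sub_le_of_mem_lipschitzConeSet hz hyG hsy (h_near y le_rfl)
  have hx_z := norm_sub_le_of_mem_lipschitzConeSet hz hx hsy (h_near x (by simp))
  calc ‖f y - f x‖ ≤ ‖f y - f z‖ + ‖f x - f z‖ := by
        simpa only [dist_eq_norm] using dist_triangle_right (f y) (f x) (f z)
    _ ≤ 2 * (K * s y) := by linarith
    _ = 4 * K / r * ‖y - x‖ := by simp only [s]; ring

lemma dirPorousAt_lipschitzConeSet (hG : IsOpen G) (hδ : 0 < δ) (hr : 0 < r)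
    (hx : x ∈ lipschitzConeSet G f K δ d r) (hfx : ¬ LipschitzAtPt f x) :
    DirPorousAt (lipschitzConeSet G f K δ d r) x := by
  have h_freq : ∃ᶠ s : ℝ in 𝓝[>] 0,
      ball (x + s • -d) (r / 2 * s) ∩ lipschitzConeSet G f K δ d r = ∅ := by
    by_contra h
    simp only [not_frequently, ← nonempty_iff_ne_empty, ← ne_eq] at h
    exact hfx (lipschitzAtPt_of_eventually_inter_lipschitzConeSet hG hx.1 hδ hr h)
  refine dirPorousAt_of_frequently (neg_ne_zero.2 ?_) (half_pos hr) h_freq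
  -- For `d = 0` every ball in `h_freq` would be centred at the point `x` of the set.
  rintro rfl
  obtain ⟨s, hs_empty, hs : 0 < s⟩ := (h_freq.and_eventually self_mem_nhdsWithin).exists
  have hx_ball : x ∈ ball (x + s • -(0 : X)) (r / 2 * s) := by
    simpa only [neg_zero, smul_zero, add_zero] using mem_ball_self (by positivity)
  exact (hs_empty.subset ⟨hx_ball, hx⟩).elim

end Lipschitz

theorem stmt14_general {X Y : Type*} [NormedAddCommGroup X] [NormedSpace ℝ X] [BaireSpace X]
    [TopologicalSpace.SeparableSpace X] [NormedAddCommGroup Y] {G : Set X} (hG : IsOpen G)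
    {f : X → Y} (hf_baire : ∀ C, IsClosed C → BaireMeasurableSet (G ∩ f ⁻¹' C))
    (hf : ∀ a ∈ G, ContinuousAlongLinesAt f a) :
    SigmaDirPorous {x ∈ G | (∀ v : X, (fun t : ℝ => f (x + t • v) - f x) =O[𝓝[>] 0] fun t => t) ∧
      ¬ LipschitzAtPt f x} := by
  let S : ℕ × ℕ × ℕ → Set X := fun ⟨n, m, i⟩ =>
    lipschitzConeSet G f n (1 / (n + 1)) (TopologicalSpace.denseSeq X i) (1 / (m + 1))
  refine sigmaDirPorous_of_subset_iUnion (S := S) ?_ ?_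
  · rintro x ⟨hxG, hx_dir, -⟩
    obtain ⟨n, m, i, hx⟩ := exists_mem_lipschitzConeSet hG hf hf_baire hxG hx_dir
      (TopologicalSpace.denseRange_denseSeq X)
    exact mem_iUnion.2 ⟨(n, m, i), hx⟩
  · rintro ⟨n, m, i⟩ x ⟨⟨-, -, hx_lip⟩, hx⟩
    exact dirPorousAt_lipschitzConeSet hG Nat.one_div_pos_of_nat Nat.one_div_pos_of_nat hx hx_lip

theorem stmt14 {X Y : Type*} [NormedAddCommGroup X] [NormedSpace ℝ X] [CompleteSpace X]
    [TopologicalSpace.SeparableSpace X]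
    [MeasurableSpace X] [BorelSpace X]
    [NormedAddCommGroup Y] [NormedSpace ℝ Y] [CompleteSpace Y]
    [MeasurableSpace Y] [BorelSpace Y]
    (G : Set X) (hG : IsOpen G) (f : X → Y) (hmeas : Measurable f)
    (hline : ∀ a v : X, v ≠ 0 →
      ContinuousOn (fun t : ℝ => f (a + t • v)) {t : ℝ | a + t • v ∈ G}) :
    SigmaDirPorous {x ∈ G | (∃ L : X →L[ℝ] Y, GateauxDiffAt f x L) ∧
      ¬ LipschitzAtPt f x} := by
  exact (stmt14_general hG
    (fun C hC => (hG.measurableSet.inter (hmeas hC.measurableSet)).baireMeasurableSet)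
    fun a ha => continuousAlongLinesAt_of_continuousOn hG hline ha).mono
      fun x ⟨hx, ⟨L, hL⟩, hx_lip⟩ => ⟨hx, hL.isBigO, hx_lip⟩
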